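/- Characterization of minimizers in large domains: Let L > 1/2 and 1/(8L) < σ < 1/2. If v ∈ Adm(L,σ) satisfies F^L(v) = 1 (which is the minimum value of F^L on Adm(L,σ)), then either v equals the indicator function of (0, σL) almost everywhere on (0,L), or v equals the indicator function of (L − σL, L) almost everywhere on (0,L). -/

import Mathlib

open MeasureTheory Filter Set

noncomputable section

/-- `Adm L σ v` : `v` is admissible, i.e. `0 ≤ v ≤ 1` on `(0,L)`, `v` has finite pointwise
total variation on `(0,L)` and `∫_{(0,L)} v = σL`. -/
def Adm (L σ : ℝ) (v : ℝ → ℝ) : Prop :=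
  (∀ x ∈ Set.Ioo 0 L, 0 ≤ v x ∧ v x ≤ 1) ∧
  BoundedVariationOn v (Set.Ioo 0 L) ∧
  (∫ x in Set.Ioo 0 L, v x) = σ * L

/-- The limit functional `F^L(v) = 2·λ({x ∈ (0,L) : 0 < v(x) < 1}) + Var(v;(0,L))`. -/
def limitF (L : ℝ) (v : ℝ → ℝ) : ℝ :=
  2 * (volume {x ∈ Set.Ioo 0 L | 0 < v x ∧ v x < 1}).toReal +
    (eVariationOn v (Set.Ioo 0 L)).toReal

/-!
Suppose `v` has variation `V` and misses the value `1`, and let `m` be the measure of the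
transition set `{0 < v < 1}`. Either `v` never vanishes, so that `m = L` and the functional is at
least `2 L > 1`, or `v ≤ V`, so that `∫ v ≤ m V ≤ m (1 - 2 m) ≤ 1 / 8`. A minimizer of larger mass
thus attains the value `1` and, by the symmetry `v ↦ 1 - v`, also the value `0`. A passage between
these values already costs variation `1`, so the transition set is null and `v` is monotone: it is
a single step, whose jump is located by its mass.
-/

section Variation

variable {α E : Type*} [LinearOrder α]

theorem eVariationOn_const_sub [SeminormedAddCommGroup E] (c : E) (f : α → E) (s : Set α) :
    eVariationOn (fun x => c - f x) s = eVariationOn f s := by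
  simp only [eVariationOn, edist_dist, dist_sub_left]

theorem edist_add_edist_add_edist_le_eVariationOn [PseudoEMetricSpace E] {f : α → E} {s : Set α}
    {p q r t : α} (hp : p ∈ s) (hq : q ∈ s) (hr : r ∈ s) (ht : t ∈ s)
    (hpq : p ≤ q) (hqr : q ≤ r) (hrt : r ≤ t) :
    edist (f p) (f q) + edist (f q) (f r) + edist (f r) (f t) ≤ eVariationOn f s := by
  have edist_le {x y : α} (hx : x ∈ s) (hy : y ∈ s) (hxy : x ≤ y) :
      edist (f x) (f y) ≤ eVariationOn f (s ∩ Icc x y) :=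
    eVariationOn.edist_le f ⟨hx, left_mem_Icc.2 hxy⟩ ⟨hy, right_mem_Icc.2 hxy⟩
  calc
    _ ≤ eVariationOn f (s ∩ Icc p q) + eVariationOn f (s ∩ Icc q r)
        + eVariationOn f (s ∩ Icc r t) := by
      gcongr <;> exact edist_le ‹_› ‹_› ‹_›
    _ = eVariationOn f (s ∩ Icc p t) := by
      rw [eVariationOn.Icc_add_Icc f hpq hqr hq, eVariationOn.Icc_add_Icc f (hpq.trans hqr) hrt hr]
    _ ≤ eVariationOn f s := eVariationOn.mono f inter_subset_left

theorem dist_add_dist_add_dist_le_eVariationOn_toReal [PseudoMetricSpace E] {f : α → E}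
    {s : Set α} (hf : BoundedVariationOn f s) {p q r t : α}
    (hp : p ∈ s) (hq : q ∈ s) (hr : r ∈ s) (ht : t ∈ s)
    (hpq : p ≤ q) (hqr : q ≤ r) (hrt : r ≤ t) :
    dist (f p) (f q) + dist (f q) (f r) + dist (f r) (f t) ≤ (eVariationOn f s).toReal := by
  rw [← ENNReal.ofReal_le_iff_le_toReal hf, ENNReal.ofReal_add (by positivity) dist_nonneg,
    ENNReal.ofReal_add dist_nonneg dist_nonneg]
  simpa only [← edist_dist] using
    edist_add_edist_add_edist_le_eVariationOn (f := f) hp hq hr ht hpq hqr hrt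

theorem monotoneOn_of_eVariationOn_toReal_le_sub {f : α → ℝ} {s : Set α}
    (hf : BoundedVariationOn f s) {a b : α} (ha : a ∈ s) (hb : b ∈ s) (hab : a ≤ b)
    (hvar : (eVariationOn f s).toReal ≤ f b - f a) : MonotoneOn f s := by
  intro x hx y hy hxy
  -- The path through `a`, `b` forces `f` to rise by all of `f b - f a` from `min x a` to
  -- `max y b`, so the path through `x`, `y` has no variation to spare for a descent.
  have hmin : min x a ∈ s := min_rec' (· ∈ s) hx ha
  have hmax : max y b ∈ s := max_rec' (· ∈ s) hy hb
  have hab_path := dist_add_dist_add_dist_le_eVariationOn_toReal hf hmin ha hb hmax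
    (min_le_right x a) hab (le_max_right y b)
  have hxy_path := dist_add_dist_add_dist_le_eVariationOn_toReal hf hmin hx hy hmax
    (min_le_left x a) hxy (le_max_left y b)
  simp only [Real.dist_eq] at hab_path hxy_path
  have htotal : f b - f a ≤ f (max y b) - f (min x a) := by
    linarith [neg_le_abs (f a - f b), le_abs_self (f (min x a) - f a),
      le_abs_self (f b - f (max y b))]
  linarith [le_abs_self (f x - f y), neg_le_abs (f (min x a) - f x),
    neg_le_abs (f y - f (max y b))]

end Variation

theorem integrableOn_of_boundedVariationOn_of_norm_le {α : Type*} [LinearOrder α]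
    [TopologicalSpace α] [OrderClosedTopology α] [MeasurableSpace α] [BorelSpace α] {μ : Measure α}
    {f : α → ℝ} {s : Set α} {C : ℝ}
    (hs : MeasurableSet s) (hs' : μ s < ⊤) (hf : BoundedVariationOn f s)
    (hC : ∀ x ∈ s, ‖f x‖ ≤ C) : IntegrableOn f s μ := by
  obtain ⟨p, q, hp, hq, rfl⟩ := hf.locallyBoundedVariationOn.exists_monotoneOn_sub_monotoneOn
  refine IntegrableOn.of_bound hs' ?_ C ((ae_restrict_iff' hs).2 (ae_of_all _ hC))
  exact ((aemeasurable_restrict_of_monotoneOn hs hp).sub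
    (aemeasurable_restrict_of_monotoneOn hs hq)).aestronglyMeasurable

theorem setIntegral_indicator_Ioo_one {a b x : ℝ} (hax : a ≤ x) (hxb : x ≤ b) :
    ∫ y in Ioo a b, (Ioo x b).indicator (fun _ => (1 : ℝ)) y = b - x := by
  rw [setIntegral_indicator measurableSet_Ioo, inter_eq_right.2 (Ioo_subset_Ioo_left hax),
    setIntegral_one_eq_measureReal, Real.volume_real_Ioo_of_le hxb]

theorem ae_eq_indicator_Ioo_of_monotoneOn {f : ℝ → ℝ} {a b : ℝ} (hf : MonotoneOn f (Ioo a b))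
    (h01 : ∀ᵐ x ∂volume.restrict (Ioo a b), f x = 0 ∨ f x = 1) :
    ∀ᵐ x ∂volume.restrict (Ioo a b),
      f x = (Ioo (b - ∫ y in Ioo a b, f y) b).indicator (fun _ => (1 : ℝ)) x := by
  have hint : IntegrableOn f (Ioo a b) :=
    IntegrableOn.of_bound measure_Ioo_lt_top
      (aemeasurable_restrict_of_monotoneOn measurableSet_Ioo hf).aestronglyMeasurable 1
      (h01.mono fun x hx => by rcases hx with hx | hx <;> simp [hx])
  let step (x : ℝ) : ℝ → ℝ := (Ioo x b).indicator fun _ => 1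
  have hstep (x : ℝ) : IntegrableOn (step x) (Ioo a b) :=
    IntegrableOn.indicator (integrableOn_const (by simp)) measurableSet_Ioo
  have hmass_le {x : ℝ} (hx : x ∈ Ioo a b) (hfx : f x = 0) : ∫ y in Ioo a b, f y ≤ b - x := by
    rw [← setIntegral_indicator_Ioo_one hx.1.le hx.2.le]
    refine integral_mono_ae hint (hstep x) ?_
    filter_upwards [h01, ae_restrict_mem measurableSet_Ioo] with y hy01 hy
    have hfy : y ≤ x → f y ≤ f x := hf hy hx
    simp only [indicator_apply, mem_Ioo]
    grind
  have hle_mass {x : ℝ} (hx : x ∈ Ioo a b) (hfx : f x = 1) : b - x ≤ ∫ y in Ioo a b, f y := by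
    rw [← setIntegral_indicator_Ioo_one hx.1.le hx.2.le]
    refine integral_mono_ae (hstep x) hint ?_
    filter_upwards [h01, ae_restrict_mem measurableSet_Ioo] with y hy01 hy
    have hfy : x ≤ y → f x ≤ f y := hf hx hy
    simp only [indicator_apply, mem_Ioo]
    grind
  filter_upwards [h01, ae_restrict_mem measurableSet_Ioo,
    Measure.ae_ne (volume.restrict (Ioo a b)) (b - ∫ y in Ioo a b, f y)] with x hx01 hx hne
  rcases hx01 with hfx | hfx
  · rw [hfx, indicator_of_notMem fun h => by linarith [h.1, hmass_le hx hfx]]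
  · have hlt : b - ∫ y in Ioo a b, f y < x := hne.symm.lt_of_le (by linarith [hle_mass hx hfx])
    rw [hfx, indicator_of_mem (mem_Ioo.2 ⟨hlt, hx.2⟩)]

section Minimizers

variable {L σ : ℝ} {v : ℝ → ℝ}

theorem Adm.integrableOn (hv : Adm L σ v) : IntegrableOn v (Ioo 0 L) :=
  integrableOn_of_boundedVariationOn_of_norm_le measurableSet_Ioo measure_Ioo_lt_top hv.2.1
    fun x hx => abs_le.2 ⟨by linarith [(hv.1 x hx).1], (hv.1 x hx).2⟩

theorem Adm.one_sub (hL : 0 ≤ L) (hv : Adm L σ v) : Adm L (1 - σ) (fun x => 1 - v x) := by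
  refine ⟨fun x hx => ?_, ?_, ?_⟩
  · constructor <;> linarith [hv.1 x hx]
  · simpa only [BoundedVariationOn, eVariationOn_const_sub] using hv.2.1
  · rw [integral_sub (integrable_const 1) hv.integrableOn, hv.2.2,
      setIntegral_one_eq_measureReal, Real.volume_real_Ioo_of_le hL]
    ring

theorem limitF_one_sub (L : ℝ) (v : ℝ → ℝ) : limitF L (fun x => 1 - v x) = limitF L v := by
  simp only [limitF, eVariationOn_const_sub, sub_pos, sub_lt_self_iff, and_comm]

theorem Adm.exists_eq_one (hL : 1 / 2 < L) (hσ : 1 / 8 < σ * L) (hv : Adm L σ v)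
    (hF : limitF L v ≤ 1) : ∃ x ∈ Ioo 0 L, v x = 1 := by
  by_contra! hne
  set V := (eVariationOn v (Ioo 0 L)).toReal
  set S := {x ∈ Ioo 0 L | 0 < v x ∧ v x < 1}
  have hF' : 2 * volume.real S + V ≤ 1 := hF
  have hV : 0 ≤ V := ENNReal.toReal_nonneg
  have hlt (x) (hx : x ∈ Ioo 0 L) : v x < 1 := (hv.1 x hx).2.lt_of_ne (hne x hx)
  by_cases hpos : ∀ x ∈ Ioo 0 L, 0 < v x
  · have hS_eq : S = Ioo 0 L := sep_eq_self_iff_mem_true.2 fun x hx => ⟨hpos x hx, hlt x hx⟩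
    rw [hS_eq, Real.volume_real_Ioo_of_le (by linarith)] at hF'
    linarith
  push Not at hpos
  obtain ⟨a, ha, hva⟩ := hpos
  have hle (x) (hx : x ∈ S) : ‖v x‖ ≤ V := by
    rw [Real.norm_of_nonneg hx.2.1.le]
    linarith [hv.2.1.sub_le hx.1 ha]
  have hmass : ∫ x in Ioo 0 L, v x = ∫ x in S, v x :=
    setIntegral_eq_of_subset_of_forall_sdiff_eq_zero measurableSet_Ioo (sep_subset _ _)
      fun x hx => (hv.1 x hx.1).1.eq_of_not_lt' fun h => hx.2 ⟨hx.1, h, hlt x hx.1⟩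
  have : σ * L ≤ 1 / 8 := calc
    σ * L = ∫ x in S, v x := by rw [← hmass, hv.2.2]
    _ ≤ V * volume.real S := (Real.le_norm_self _).trans <| norm_setIntegral_le_of_norm_le_const
      ((measure_mono (sep_subset _ _)).trans_lt measure_Ioo_lt_top) hle
    _ ≤ (1 - 2 * volume.real S) * volume.real S := by gcongr; linarith
    _ ≤ 1 / 8 := by linarith [sq_nonneg (4 * volume.real S - 1)]
  linarith

theorem Adm.exists_eq_zero (hL : 1 / 2 < L) (hσ : 1 / 8 < (1 - σ) * L) (hv : Adm L σ v)
    (hF : limitF L v ≤ 1) : ∃ x ∈ Ioo 0 L, v x = 0 := by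
  obtain ⟨x, hx, hvx⟩ :=
    (hv.one_sub (by linarith)).exists_eq_one hL hσ ((limitF_one_sub L v).trans_le hF)
  exact ⟨x, hx, by linarith⟩

theorem Adm.ae_eq_indicator_of_zero_of_one (hv : Adm L σ v) (hF : limitF L v ≤ 1) {a b : ℝ}
    (ha : a ∈ Ioo 0 L) (hb : b ∈ Ioo 0 L) (hab : a ≤ b) (hva : v a = 0) (hvb : v b = 1) :
    ∀ᵐ x ∂volume.restrict (Ioo 0 L),
      v x = (Ioo (L - σ * L) L).indicator (fun _ => (1 : ℝ)) x := by
  set S := {x ∈ Ioo 0 L | 0 < v x ∧ v x < 1}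
  have hF' : 2 * volume.real S + (eVariationOn v (Ioo 0 L)).toReal ≤ 1 := hF
  have hS : 0 ≤ volume.real S := measureReal_nonneg
  have hvar : v b - v a ≤ (eVariationOn v (Ioo 0 L)).toReal := hv.2.1.sub_le hb ha
  have hS_null : volume S = 0 := by
    have hS_fin : volume S ≠ ⊤ := measure_ne_top_of_subset (sep_subset _ _) measure_Ioo_lt_top.ne
    rw [← measureReal_eq_zero_iff hS_fin]
    linarith
  have hmono : MonotoneOn v (Ioo 0 L) :=
    monotoneOn_of_eVariationOn_toReal_le_sub hv.2.1 ha hb hab (by linarith)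
  rw [← hv.2.2]
  refine ae_eq_indicator_Ioo_of_monotoneOn hmono ?_
  filter_upwards [ae_restrict_mem measurableSet_Ioo,
    ae_restrict_of_ae (measure_eq_zero_iff_ae_notMem.1 hS_null)] with x hx hxS
  grind [hv.1 x hx]

theorem Adm.ae_eq_indicator_of_one_of_zero (hv : Adm L σ v) (hF : limitF L v ≤ 1) {a b : ℝ}
    (ha : a ∈ Ioo 0 L) (hb : b ∈ Ioo 0 L) (hab : a ≤ b) (hva : v a = 1) (hvb : v b = 0) :
    ∀ᵐ x ∂volume.restrict (Ioo 0 L),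
      v x = (Ioo 0 (σ * L)).indicator (fun _ => (1 : ℝ)) x := by
  have hstep := (hv.one_sub (ha.1.trans ha.2).le).ae_eq_indicator_of_zero_of_one
    ((limitF_one_sub L v).trans_le hF) ha hb hab (by simp [hva]) (by simp [hvb])
  filter_upwards [hstep, ae_restrict_mem measurableSet_Ioo,
    Measure.ae_ne (volume.restrict (Ioo 0 L)) (σ * L)] with x hx hxL hne
  rw [show L - (1 - σ) * L = σ * L by ring] at hx
  simp only [indicator_apply, mem_Ioo] at hx ⊢
  grind

theorem large_domain_minimizers_general (hL : 1 / 2 < L) (hσ : 1 / 8 < σ * L)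
    (hσ' : 1 / 8 < (1 - σ) * L) (hv : Adm L σ v) (hF : limitF L v ≤ 1) :
    (∀ᵐ x ∂volume.restrict (Ioo 0 L), v x = (Ioo 0 (σ * L)).indicator (fun _ => (1 : ℝ)) x) ∨
    (∀ᵐ x ∂volume.restrict (Ioo 0 L),
      v x = (Ioo (L - σ * L) L).indicator (fun _ => (1 : ℝ)) x) := by
  obtain ⟨a, ha, hva⟩ := hv.exists_eq_zero hL hσ' hF
  obtain ⟨b, hb, hvb⟩ := hv.exists_eq_one hL hσ hF
  rcases le_total a b with hab | hba
  · exact .inr (hv.ae_eq_indicator_of_zero_of_one hF ha hb hab hva hvb)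
  · exact .inl (hv.ae_eq_indicator_of_one_of_zero hF hb ha hba hvb hva)

end Minimizers

/-- Characterization of minimizers in large domains: for `L > 1/2` and `1/(8L) < σ < 1/2`,
any `v ∈ Adm(L,σ)` with `F^L(v) = 1` equals a.e. on `(0,L)` the indicator of `(0,σL)` or
the indicator of `(L−σL, L)`. -/
theorem large_domain_minimizers (L σ : ℝ)
    (hL : 1 / 2 < L) (hσ1 : 1 / (8 * L) < σ) (hσ2 : σ < 1 / 2)
    (v : ℝ → ℝ) (hv : Adm L σ v) (hmin : limitF L v = 1) :
    (∀ᵐ x ∂(volume.restrict (Set.Ioo 0 L)),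
        v x = Set.indicator (Set.Ioo 0 (σ * L)) (fun _ => (1 : ℝ)) x) ∨
    (∀ᵐ x ∂(volume.restrict (Set.Ioo 0 L)),
        v x = Set.indicator (Set.Ioo (L - σ * L) L) (fun _ => (1 : ℝ)) x) :=
  large_domain_minimizers_general hL
    (by rw [div_lt_iff₀ (by positivity)] at hσ1; linarith) (by nlinarith) hv hmin.le
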